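/- arXiv:1211.3945 — 5 statements merged into one kernel-verified Lean document; each statement's English description precedes it below -/
import Mathlib

section
/- Scott's formula: Let n ≥ 1, r ≥ 1 and let T = (T_1, …, T_{r+1}) ∈ GL_n(ℂ)^{r+1} be an irreducible M-tuple such that at least one T_i is not the identity matrix. Then ∑_{i=1}^{r+1} rank(T_i − I_n) ≥ 2n. -/
open Matrix

/-!
The map `v ↦ (T i v - v)ᵢ` from `V` to `∏ i, range (T i - 1)` has the common fixed space as kernel.
Differentiating the relation `T 0 * ⋯ * T (m - 1) = 1` gives a map
`u ↦ ∑ i, T 0 ⋯ T (i - 1) (u i)` back to `V`, whose range contains every `T i v - v`, and the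
composite of the two maps is `T 0 ⋯ T (m - 1) - 1 = 0`. Comparing the kernel of the second map
with the range of the first bounds the sum of the ranks from below by twice the dimension of `V`,
up to the common fixed space and the span of all `T i v - v`; irreducibility makes the first
trivial and the second everything.
-/

universe u

theorem rank_pi_fin (R : Type*) [Semiring R] [StrongRankCondition R] {m : ℕ} (M : Fin m → Type u)
    [∀ i, AddCommMonoid (M i)] [∀ i, Module R (M i)] [∀ i, Module.Free R (M i)] :
    Module.rank R (∀ i, M i) = ∑ i, Module.rank R (M i) := by
  induction m with
  | zero =>
    have := nontrivial_of_invariantBasisNumber R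
    rw [Finset.univ_eq_empty, Finset.sum_empty, rank_subsingleton']
  | succ m ih =>
    rw [← (Fin.consLinearEquiv R M).rank_eq, rank_prod', ih, Fin.sum_univ_succ]

theorem rank_add_rank_range_le_of_comp_eq_zero {R : Type*} {U V W : Type u} [Ring R]
    [HasRankNullity.{u} R] [AddCommGroup U] [Module R U] [AddCommGroup V] [Module R V]
    [AddCommGroup W] [Module R W] {f : U →ₗ[R] V} {g : V →ₗ[R] W} (hgf : g ∘ₗ f = 0) :
    Module.rank R U + g.rank ≤ Module.rank R (LinearMap.ker f) + Module.rank R V := by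
  have range_le_ker : f.rank ≤ Module.rank R (LinearMap.ker g) :=
    Submodule.rank_mono (LinearMap.range_le_ker_iff.mpr hgf)
  calc Module.rank R U + g.rank
      = Module.rank R (LinearMap.ker f) + (g.rank + f.rank) := by
        rw [← f.rank_range_add_rank_ker]; ring
    _ ≤ Module.rank R (LinearMap.ker f) + (g.rank + Module.rank R (LinearMap.ker g)) := by gcongr
    _ = Module.rank R (LinearMap.ker f) + Module.rank R V := by rw [g.rank_range_add_rank_ker]

theorem sum_partialProd_mul_sub_one {R : Type*} [Ring R] {m : ℕ} (a : Fin m → R) :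
    ∑ i, Fin.partialProd a i.castSucc * (a i - 1) = (List.ofFn a).prod - 1 := by
  induction m with
  | zero => simp
  | succ m ih =>
    calc ∑ i, Fin.partialProd a i.castSucc * (a i - 1)
        = (a 0 - 1) + a 0 * ∑ i, Fin.partialProd (Fin.tail a) i.castSucc * (Fin.tail a i - 1) := by
          simp [Fin.sum_univ_succ, Fin.partialProd_succ', Finset.mul_sum, mul_assoc, Fin.tail]
      _ = (List.ofFn a).prod - 1 := by
          rw [ih, List.ofFn_succ, List.prod_cons]
          unfold Fin.tail
          noncomm_ring

section Tuple

variable {R V : Type*} [Ring R] [AddCommGroup V] [Module R V]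

/-- The coboundary of a tuple of endomorphisms, sending `v` to the tuple of all `T i v - v`. The
codomain is cut down to the ranges of the `T i - 1` so that its dimension is the sum of their
ranks. -/
def tupleCoboundary {ι : Type*} (T : ι → Module.End R V) :
    V →ₗ[R] ∀ i, LinearMap.range (T i - 1) :=
  LinearMap.pi fun i => (T i - 1).rangeRestrict

/-- The differential of the product map at the tuple `T`, in the sense of Fox calculus: the
coefficient of the `i`-th component is the Fox derivative of `x₀ ⋯ xₘ₋₁` with respect to `xᵢ`,
namely the product of the factors to the left of `xᵢ`. -/
def productDifferential {m : ℕ} (T : Fin m → Module.End R V) :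
    (∀ i, LinearMap.range (T i - 1)) →ₗ[R] V :=
  ∑ i, Fin.partialProd T i.castSucc ∘ₗ (LinearMap.range (T i - 1)).subtype ∘ₗ LinearMap.proj i

theorem ker_tupleCoboundary {ι : Type*} (T : ι → Module.End R V) :
    LinearMap.ker (tupleCoboundary T) = ⨅ i, LinearMap.ker (T i - 1) := by
  simp [tupleCoboundary, LinearMap.ker_pi]

variable {m : ℕ} (T : Fin m → Module.End R V)

theorem productDifferential_comp_tupleCoboundary :
    productDifferential T ∘ₗ tupleCoboundary T = (List.ofFn T).prod - 1 := by
  rw [← sum_partialProd_mul_sub_one]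
  ext v
  simp [productDifferential, tupleCoboundary]

theorem productDifferential_single (i : Fin m) (u : LinearMap.range (T i - 1)) :
    productDifferential T (Pi.single i u) = Fin.partialProd T i.castSucc u := by
  simp only [productDifferential, LinearMap.sum_apply, LinearMap.comp_apply,
    LinearMap.proj_apply, Submodule.subtype_apply]
  rw [Finset.sum_eq_single i] <;> simp +contextual

theorem partialProd_apply_mem_range_productDifferential (i : Fin m) (v : V) :
    Fin.partialProd T i.castSucc (T i v - v) ∈ LinearMap.range (productDifferential T) :=
  ⟨Pi.single i ⟨T i v - v, v, rfl⟩, productDifferential_single T i _⟩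

theorem partialProd_apply_sub_mem_range_productDifferential (k : Fin (m + 1)) (v : V) :
    Fin.partialProd T k v - v ∈ LinearMap.range (productDifferential T) := by
  induction k using Fin.induction with
  | zero => simp
  | succ i ih =>
    rw [Fin.partialProd_succ, Module.End.mul_apply]
    simpa using add_mem (partialProd_apply_mem_range_productDifferential T i v) ih

theorem iSup_range_sub_one_le_range_productDifferential :
    ⨆ i, LinearMap.range (T i - 1) ≤ LinearMap.range (productDifferential T) := by
  refine iSup_le fun i => ?_
  rintro _ ⟨v, rfl⟩
  simpa using sub_mem (partialProd_apply_mem_range_productDifferential T i v)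
    (partialProd_apply_sub_mem_range_productDifferential T i.castSucc (T i v - v))

end Tuple

section Scott

variable {K : Type*} {V : Type u} [DivisionRing K] [AddCommGroup V] [Module K V] {m : ℕ}
  {T : Fin m → Module.End K V}

theorem rank_add_rank_iSup_range_sub_one_le (hprod : (List.ofFn T).prod = 1) :
    Module.rank K V + Module.rank K ↥(⨆ i, LinearMap.range (T i - 1)) ≤
      Module.rank K ↥(⨅ i, LinearMap.ker (T i - 1)) + ∑ i, (T i - 1).rank := by
  have comp_eq_zero : productDifferential T ∘ₗ tupleCoboundary T = 0 := by
    rw [productDifferential_comp_tupleCoboundary, hprod, sub_self]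
  calc Module.rank K V + Module.rank K ↥(⨆ i, LinearMap.range (T i - 1))
      ≤ Module.rank K V + (productDifferential T).rank := by
        gcongr
        exact Submodule.rank_mono (iSup_range_sub_one_le_range_productDifferential T)
    _ ≤ Module.rank K (LinearMap.ker (tupleCoboundary T)) +
          Module.rank K (∀ i, LinearMap.range (T i - 1)) :=
        rank_add_rank_range_le_of_comp_eq_zero comp_eq_zero
    _ = _ := by rw [ker_tupleCoboundary, rank_pi_fin]

theorem scott_formula_general (hprod : (List.ofFn T).prod = 1)
    (hIrr : ∀ W : Submodule K V, (∀ i, ∀ v ∈ W, T i v ∈ W) → W = ⊥ ∨ W = ⊤)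
    (hne : ∃ i, T i ≠ 1) :
    2 * Module.rank K V ≤ ∑ i, (T i - 1).rank := by
  obtain ⟨j, hj⟩ := hne
  have fixed_eq_bot : ⨅ i, LinearMap.ker (T i - 1) = ⊥ := by
    refine (hIrr _ fun i v hv => ?_).resolve_right fun h => hj ?_
    · have : T i v = v := sub_eq_zero.mp ((Submodule.mem_iInf _).mp hv i)
      rwa [this]
    · exact sub_eq_zero.mp (LinearMap.ker_eq_top.mp (iInf_eq_top.mp h j))
  have displacements_eq_top : ⨆ i, LinearMap.range (T i - 1) = ⊤ := by
    refine (hIrr _ fun i v hv => ?_).resolve_left fun h => hj ?_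
    · have : T i v - v ∈ ⨆ i, LinearMap.range (T i - 1) :=
        Submodule.mem_iSup_of_mem i ⟨v, rfl⟩
      simpa using add_mem this hv
    · exact sub_eq_zero.mp (LinearMap.range_eq_bot.mp (iSup_eq_bot.mp h j))
  have key := rank_add_rank_iSup_range_sub_one_le hprod
  rwa [fixed_eq_bot, displacements_eq_top, rank_top, rank_bot, zero_add, ← two_mul] at key

end Scott

theorem rank_toLinAlgEquiv'_sub_one {R n : Type*} [CommRing R] [Nontrivial R] [Fintype n]
    [DecidableEq n] (A : Matrix n n R) : (toLinAlgEquiv' A - 1).rank = (A - 1).rank := by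
  rw [← map_one toLinAlgEquiv', ← map_sub]
  exact (Module.finrank_eq_rank R _).symm

/-- **Scott's formula.** For an irreducible M-tuple `T = (T_1, …, T_{r+1})` in `GL_n(ℂ)`
(i.e. invertible matrices with product the identity, admitting no nontrivial common
invariant subspace) in which at least one member is not the identity, one has
`∑ rank (T_i − 1) ≥ 2n`. -/
theorem scott_formula (n r : ℕ) (hn : 1 ≤ n) (hr : 1 ≤ r)
    (T : Fin (r + 1) → Matrix (Fin n) (Fin n) ℂ)
    (hUnit : ∀ i, IsUnit (T i))
    (hprod : (List.ofFn T).prod = 1)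
    (hIrr : ∀ W : Submodule ℂ (Fin n → ℂ),
      (∀ i, ∀ v ∈ W, (T i).mulVec v ∈ W) → W = ⊥ ∨ W = ⊤)
    (hne : ∃ i, T i ≠ 1) :
    2 * n ≤ ∑ i : Fin (r + 1), (T i - 1).rank := by
  have prod_eq_one : (List.ofFn (toLinAlgEquiv' ∘ T)).prod = 1 := by
    rw [← List.map_ofFn, ← map_list_prod, hprod, map_one]
  have h := scott_formula_general prod_eq_one hIrr (by simpa using hne)
  simp only [Function.comp_apply, rank_toLinAlgEquiv'_sub_one, rank_fin_fun] at h
  exact_mod_cast h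
end

section
/- Let ε ∈ {1, −1}, let α ∈ ℂ× with α² ≠ 1, and let A ∈ Sp₄(ℂ) satisfy (A − εαI)(A − εα⁻¹I)(A − εI) = 0 and rank(A − εI) = 2 (so A is semisimple with eigenvalues εα, εα⁻¹, ε, ε; Jordan form ±([α] ⊕ J(1)²)). Then dim_ℂ c(A) = 4, equivalently δ(A) = 6. -/
open Matrix

noncomputable section

/-- The standard symplectic form matrix `Ω = [[0, I₂], [−I₂, 0]]` on `ℂ⁴`. -/
def Omega : Matrix (Fin 4) (Fin 4) ℂ :=
  !![0, 0, 1, 0; 0, 0, 0, 1; -1, 0, 0, 0; 0, -1, 0, 0]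

/-- The centralizer `c(A) = {X ∈ 𝔰𝔭₄(ℂ) : A X = X A}` of `A` inside the Lie algebra
`𝔰𝔭₄(ℂ) = {X : Xᵀ Ω + Ω X = 0}`, as a complex subspace of the `4×4` matrices. -/
def sp4cent (A : Matrix (Fin 4) (Fin 4) ℂ) : Submodule ℂ (Matrix (Fin 4) (Fin 4) ℂ) where
  carrier := {X | Xᵀ * Omega + Omega * X = 0 ∧ A * X = X * A}
  add_mem' := by
    rintro X Y ⟨hX1, hX2⟩ ⟨hY1, hY2⟩
    refine ⟨?_, ?_⟩
    · have h : (X + Y)ᵀ * Omega + Omega * (X + Y)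
          = (Xᵀ * Omega + Omega * X) + (Yᵀ * Omega + Omega * Y) := by
        rw [Matrix.transpose_add, Matrix.add_mul, Matrix.mul_add]
        abel
      rw [h, hX1, hY1, add_zero]
    · rw [Matrix.mul_add, Matrix.add_mul, hX2, hY2]
  zero_mem' := by
    refine ⟨?_, ?_⟩ <;> simp
  smul_mem' := by
    rintro c X ⟨hX1, hX2⟩
    refine ⟨?_, ?_⟩
    · have h : (c • X)ᵀ * Omega + Omega * (c • X) = c • (Xᵀ * Omega + Omega * X) := by
        rw [Matrix.transpose_smul, Matrix.smul_mul, Matrix.mul_smul, smul_add]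
      rw [h, hX1, smul_zero]
    · rw [Matrix.mul_smul, Matrix.smul_mul, hX2]

/-!
For `A` preserving an invertible skew-symmetric form `J`, the map `X ↦ J X` identifies the
centralizer of `A` in the Lie algebra of `J` with the space of `A`-invariant symmetric bilinear
forms. When `A` has an eigenbasis with eigenvalues `dᵢ`, such a form is determined by its values on
the pairs of basis vectors, and invariance kills exactly those with `dᵢ dⱼ ≠ 1`. So the dimension
is the number of unordered pairs `{i, j}` (with `i = j` allowed) such that `dᵢ dⱼ = 1`; for the
eigenvalues `εα, εα⁻¹, ε, ε` these are `{1, 2}, {3, 3}, {3, 4}, {4, 4}`.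
-/

section Centralizer

variable {R n : Type*} [CommRing R] [Fintype n] [DecidableEq n]

/-- The matrices that commute with `A` and are skew-adjoint for the bilinear form of `J`: the
centralizer of `A` in the Lie algebra of the isometry group of `J`. -/
def skewAdjointCentralizer (J A : Matrix n n R) : Submodule R (Matrix n n R) :=
  skewAdjointMatricesSubmodule J ⊓ Subalgebra.toSubmodule (Subalgebra.centralizer R {A})

/-- The Gram matrices of the symmetric bilinear forms preserved by `A`. -/
def invariantSymmForms (A : Matrix n n R) : Submodule R (Matrix n n R) where
  carrier := {S | S.IsSymm ∧ Aᵀ * S * A = S}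
  add_mem' := fun hS hT => ⟨hS.1.add hT.1, by rw [mul_add, add_mul, hS.2, hT.2]⟩
  zero_mem' := ⟨isSymm_zero, by rw [mul_zero, zero_mul]⟩
  smul_mem' := fun c _ hS => ⟨hS.1.smul c, by rw [mul_smul_comm, smul_mul_assoc, hS.2]⟩

theorem mem_skewAdjointCentralizer {J A X : Matrix n n R} :
    X ∈ skewAdjointCentralizer J A ↔ Xᵀ * J + J * X = 0 ∧ A * X = X * A := by
  simp [skewAdjointCentralizer, Matrix.IsSkewAdjoint, Matrix.IsAdjointPair,
    Subalgebra.mem_centralizer_iff, eq_neg_iff_add_eq_zero]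

theorem mem_invariantSymmForms {A S : Matrix n n R} :
    S ∈ invariantSymmForms A ↔ S.IsSymm ∧ Aᵀ * S * A = S :=
  Iff.rfl

theorem isUnit_of_transpose_mul_mul_eq {J A : Matrix n n R} (hJ : IsUnit J)
    (hA : Aᵀ * J * A = J) : IsUnit A := by
  rw [← hA] at hJ
  exact isUnit_of_mul_isUnit_right hJ

theorem mem_skewAdjointCentralizer_iff_mul_mem {J A X : Matrix n n R} (hJ : IsUnit J)
    (hJskew : Jᵀ = -J) (hA : Aᵀ * J * A = J) :
    X ∈ skewAdjointCentralizer J A ↔ J * X ∈ invariantSymmForms A := by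
  have hAJ : IsUnit (Aᵀ * J) :=
    ((isUnit_transpose A).2 (isUnit_of_transpose_mul_mul_eq hJ hA)).mul hJ
  rw [mem_skewAdjointCentralizer, mem_invariantSymmForms]
  refine and_congr ?_ ?_
  · rw [IsSymm, transpose_mul, hJskew, mul_neg, neg_eq_iff_add_eq_zero]
  · calc A * X = X * A ↔ Aᵀ * J * (A * X) = Aᵀ * J * (X * A) := hAJ.mul_right_inj.symm
      _ ↔ Aᵀ * (J * X) * A = J * X := by rw [← mul_assoc, hA, eq_comm]; simp only [mul_assoc]

theorem mem_invariantSymmForms_iff_congr_mem {A B P S : Matrix n n R} (hP : IsUnit P)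
    (hAP : A * P = P * B) :
    S ∈ invariantSymmForms A ↔ Pᵀ * S * P ∈ invariantSymmForms B := by
  have hcancel {X Y : Matrix n n R} : Pᵀ * X * P = Pᵀ * Y * P ↔ X = Y := by
    rw [hP.mul_left_inj, ((isUnit_transpose P).2 hP).mul_right_inj]
  rw [mem_invariantSymmForms, mem_invariantSymmForms]
  refine and_congr ?_ ?_
  · rw [IsSymm, IsSymm, transpose_mul, transpose_mul, transpose_transpose, ← mul_assoc, hcancel]
  · have hpull : Bᵀ * (Pᵀ * S * P) * B = Pᵀ * (Aᵀ * S * A) * P := by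
      calc Bᵀ * (Pᵀ * S * P) * B = (P * B)ᵀ * S * (P * B) := by
            simp only [transpose_mul, mul_assoc]
        _ = Pᵀ * (Aᵀ * S * A) * P := by
            rw [← hAP]; simp only [transpose_mul, mul_assoc]
    rw [hpull, hcancel]

theorem mem_invariantSymmForms_diagonal {d : n → R} {S : Matrix n n R} :
    S ∈ invariantSymmForms (diagonal d) ↔ S.IsSymm ∧ ∀ i j, d i * S i j * d j = S i j := by
  simp [mem_invariantSymmForms, ← Matrix.ext_iff]

theorem apply_eq_zero_of_mem_invariantSymmForms_diagonal [IsDomain R] {d : n → R}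
    {S : Matrix n n R} (hS : S ∈ invariantSymmForms (diagonal d)) {i j : n} (hij : d i * d j ≠ 1) :
    S i j = 0 := by
  have h : (d i * d j - 1) * S i j = 0 := by
    linear_combination (mem_invariantSymmForms_diagonal.1 hS).2 i j
  exact (mul_eq_zero.1 h).resolve_left (sub_ne_zero.2 hij)

open scoped Classical in
/-- An invariant symmetric form of a diagonal matrix amounts to its values at the unordered pairs
of indices whose eigenvalues have product `1`. -/
def invariantSymmFormsDiagonalEquiv [IsDomain R] (d : n → R) :
    invariantSymmForms (diagonal d) ≃ₗ[R] ({s : Sym2 n // (s.map d).mul = 1} → R) where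
  toFun S s := Sym2.lift ⟨fun i j => S.1 i j, fun i j => S.2.1.apply j i⟩ s.1
  map_add' S T := by
    ext ⟨s, hs⟩
    induction s with | _ i j => rfl
  map_smul' c S := by
    ext ⟨s, hs⟩
    induction s with | _ i j => rfl
  invFun f :=
    ⟨of fun i j => if h : (s(i, j).map d).mul = 1 then f ⟨s(i, j), h⟩ else 0, by
      refine mem_invariantSymmForms_diagonal.2 ⟨IsSymm.ext fun i j => ?_, fun i j => ?_⟩
      · simp only [of_apply, Sym2.eq_swap]
      · by_cases h : d i * d j = 1
        · simp [h, mul_right_comm]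
        · simp [h]⟩
  left_inv S := by
    ext i j
    by_cases h : d i * d j = 1
    · simp [h]
    · simp [h, apply_eq_zero_of_mem_invariantSymmForms_diagonal S.2 h]
  right_inv f := by
    ext ⟨s, hs⟩
    induction s with | _ i j => exact dif_pos hs

theorem finrank_eq_of_mem_iff_mul_mul_mem {S : Type*} [Ring S] [Algebra R S]
    {U V : S} (hU : IsUnit U) (hV : IsUnit V) {p q : Submodule R S}
    (h : ∀ X, X ∈ p ↔ U * X * V ∈ q) : Module.finrank R p = Module.finrank R q := by
  have hbij : Function.Bijective (LinearMap.mulLeftRight R (U, V)) :=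
    (IsUnit.isUnit_iff_mulRight_bijective.1 hV).comp (IsUnit.isUnit_iff_mulLeft_bijective.1 hU)
  obtain rfl : p = q.comap (LinearMap.mulLeftRight R (U, V)) := Submodule.ext h
  exact ((LinearEquiv.ofBijective _ hbij).ofSubmodule' q).finrank_eq

theorem finrank_skewAdjointCentralizer [IsDomain R] {J A P : Matrix n n R} {d : n → R}
    (hJ : IsUnit J) (hJskew : Jᵀ = -J) (hA : Aᵀ * J * A = J) (hP : IsUnit P)
    (hAP : A * P = P * diagonal d) :
    Module.finrank R (skewAdjointCentralizer J A) =
      Nat.card {s : Sym2 n // (s.map d).mul = 1} := by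
  classical
  calc Module.finrank R (skewAdjointCentralizer J A)
      = Module.finrank R (invariantSymmForms (diagonal d)) := by
        refine finrank_eq_of_mem_iff_mul_mul_mem (((isUnit_transpose P).2 hP).mul hJ) hP
          fun X => ?_
        rw [mem_skewAdjointCentralizer_iff_mul_mem hJ hJskew hA,
          mem_invariantSymmForms_iff_congr_mem hP hAP, ← mul_assoc Pᵀ]
    _ = Nat.card {s : Sym2 n // (s.map d).mul = 1} := by
        rw [(invariantSymmFormsDiagonalEquiv d).finrank_eq, Module.finrank_fintype_fun_eq_card,
          Nat.card_eq_fintype_card]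

end Centralizer

section Diagonalization

theorem exists_linearIndependent_apply_eq_smul {R M ι : Type*} [CommRing R] [IsDomain R]
    [AddCommGroup M] [Module R M] [Module.IsTorsionFree R M] [Finite ι] {f : Module.End R M}
    {d : ι → R} (h : ∀ μ, Nat.card {i // d i = μ} ≤ Module.finrank R (f.eigenspace μ)) :
    ∃ v : ι → M, LinearIndependent R v ∧ ∀ i, f (v i) = d i • v i := by
  have hfiber (μ : R) : ∃ w : {i // d i = μ} → f.eigenspace μ, LinearIndependent R w := by
    obtain ⟨w, hw⟩ := exists_linearIndependent_of_le_finrank (h μ)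
    exact ⟨w ∘ Finite.equivFin _, hw.comp _ (Equiv.injective _)⟩
  choose w hw using hfiber
  have hspan (μ : R) : Submodule.span R (Set.range fun i => (w μ i : M)) ≤ f.eigenspace μ :=
    Submodule.span_le.2 (Set.range_subset_iff.2 fun i => (w μ i).2)
  have hsigma : LinearIndependent R fun p : Σ μ, {i // d i = μ} => (w p.1 p.2 : M) :=
    linearIndependent_iUnion_finite
      (fun μ => (hw μ).map' (f.eigenspace μ).subtype (Submodule.ker_subtype _))
      fun μ t _ hμ => (f.eigenspaces_iSupIndep.disjoint_biSup hμ).mono (hspan μ)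
        (iSup₂_mono fun ν _ => hspan ν)
  exact ⟨fun i => w (d i) ⟨i, rfl⟩, hsigma.comp _ (Equiv.sigmaFiberEquiv d).symm.injective,
    fun i => Module.End.mem_eigenspace_iff.1 (w (d i) ⟨i, rfl⟩).2⟩

variable {K n : Type*} [Field K] [Fintype n] [DecidableEq n]

theorem exists_isUnit_mul_eq_mul_diagonal {A : Matrix n n K} {d : n → K}
    (h : ∀ μ, Nat.card {i // d i = μ} ≤ Module.finrank K (Module.End.eigenspace A.toLin' μ)) :
    ∃ P : Matrix n n K, IsUnit P ∧ A * P = P * diagonal d := by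
  obtain ⟨v, hv, hAv⟩ := exists_linearIndependent_apply_eq_smul h
  refine ⟨(of v)ᵀ, linearIndependent_cols_iff_isUnit.1 hv, ?_⟩
  ext i j
  rw [mul_diagonal, transpose_apply, of_apply, mul_comm]
  exact congrFun (hAv j) i

theorem rank_sub_smul_one_add_finrank_eigenspace (A : Matrix n n K) (μ : K) :
    (A - μ • (1 : Matrix n n K)).rank + Module.finrank K (Module.End.eigenspace A.toLin' μ) =
      Fintype.card n := by
  have hker : Module.End.eigenspace A.toLin' μ =
      LinearMap.ker (A - μ • (1 : Matrix n n K)).mulVecLin := by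
    ext x
    rw [Module.End.mem_eigenspace_iff, LinearMap.mem_ker, toLin'_apply, mulVecLin_apply,
      sub_mulVec, smul_mulVec, one_mulVec, sub_eq_zero]
  rw [hker, rank, LinearMap.finrank_range_add_finrank_ker, Module.finrank_fintype_fun_eq_card]

theorem rank_sub_smul_one_eq_of_mul_eq_one {J A : Matrix n n K} (hJ : IsUnit J)
    (hA : Aᵀ * J * A = J) {a b : K} (hab : a * b = 1) :
    (A - a • (1 : Matrix n n K)).rank = (A - b • (1 : Matrix n n K)).rank := by
  have hAdet : IsUnit (J * A).det :=
    (isUnit_iff_isUnit_det _).1 (hJ.mul (isUnit_of_transpose_mul_mul_eq hJ hA))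
  have hJdet : IsUnit ((-b) • J).det := by
    have hb : b ≠ 0 := right_ne_zero_of_mul_eq_one hab
    rw [det_smul]
    exact ((IsUnit.mk0 _ (neg_ne_zero.2 hb)).pow _).mul ((isUnit_iff_isUnit_det J).1 hJ)
  have hswap : (-b) • J * (A - a • (1 : Matrix n n K)) =
      (A - b • (1 : Matrix n n K))ᵀ * (J * A) := by
    calc (-b) • J * (A - a • (1 : Matrix n n K)) = (a * b) • J - b • (J * A) := by
          simp only [mul_sub, smul_mul_assoc, mul_smul_comm, mul_one, smul_smul]
          module
      _ = Aᵀ * J * A - b • (J * A) := by rw [hab, one_smul, hA]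
      _ = (A - b • (1 : Matrix n n K))ᵀ * (J * A) := by simp [sub_mul, mul_assoc]
  calc (A - a • (1 : Matrix n n K)).rank = ((-b) • J * (A - a • (1 : Matrix n n K))).rank :=
        (rank_mul_eq_right_of_isUnit_det _ _ hJdet).symm
    _ = (A - b • (1 : Matrix n n K))ᵀ.rank := by
        rw [hswap, rank_mul_eq_left_of_isUnit_det _ _ hAdet]
    _ = (A - b • (1 : Matrix n n K)).rank := rank_transpose _

theorem isUnit_of_rank_eq_card {M : Matrix n n K} (hM : M.rank = Fintype.card n) : IsUnit M := by
  rw [← linearIndependent_cols_iff_isUnit, linearIndependent_iff_card_eq_finrank_span,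
    Set.finrank, ← rank_eq_finrank_span_cols, hM]

theorem rank_sub_smul_one_lt_card {J A B : Matrix n n K} (hJ : IsUnit J)
    (hA : Aᵀ * J * A = J) {a b : K} (hab : a * b = 1) (hB : B ≠ 0)
    (h : (A - a • (1 : Matrix n n K)) * (A - b • (1 : Matrix n n K)) * B = 0) :
    (A - a • (1 : Matrix n n K)).rank < Fintype.card n := by
  refine (rank_le_card_width _).lt_of_ne fun hrank => hB ?_
  have ha := isUnit_of_rank_eq_card hrank
  have hb := isUnit_of_rank_eq_card (rank_sub_smul_one_eq_of_mul_eq_one hJ hA hab ▸ hrank)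
  exact (ha.mul hb).mul_right_eq_zero.1 h

end Diagonalization

section DimensionFour

variable {K : Type*} [Field K] {J A : Matrix (Fin 4) (Fin 4) K} {a b ε : K}

theorem ne_of_mul_eq_one_of_ne (hab : a * b = 1) (hne : a ≠ b) (hε : ε * ε = 1) : a ≠ ε := by
  rintro rfl
  exact hne (mul_left_cancel₀ (left_ne_zero_of_mul_eq_one hε) (hε.trans hab.symm))

theorem card_sym2_mul_eq_one (hab : a * b = 1) (hne : a ≠ b) (hε : ε * ε = 1) :
    Nat.card {s : Sym2 (Fin 4) // (s.map ![a, b, ε, ε]).mul = 1} = 4 := by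
  have haa : a * a ≠ 1 := fun h => ne_of_mul_eq_one_of_ne hab hne h rfl
  have hbb : b * b ≠ 1 := fun h =>
    ne_of_mul_eq_one_of_ne (mul_comm a b ▸ hab) hne.symm h rfl
  have haε : a * ε ≠ 1 := fun h => ne_of_mul_eq_one_of_ne hab hne hε
    (mul_right_cancel₀ (left_ne_zero_of_mul_eq_one hε) (h.trans hε.symm))
  have hbε : b * ε ≠ 1 := fun h => ne_of_mul_eq_one_of_ne (mul_comm a b ▸ hab) hne.symm hε
    (mul_right_cancel₀ (left_ne_zero_of_mul_eq_one hε) (h.trans hε.symm))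
  have hpairs (s : Sym2 (Fin 4)) : (s.map ![a, b, ε, ε]).mul = 1 ↔
      s ∈ ({s(0, 1), s(2, 2), s(2, 3), s(3, 3)} : Finset (Sym2 (Fin 4))) := by
    induction s with | _ i j =>
    fin_cases i <;> fin_cases j <;> simp [hab, hε, haa, hbb, haε, hbε, mul_comm b a,
      mul_comm ε a, mul_comm ε b]
  simp only [hpairs]
  rw [Nat.card_eq_fintype_card, Fintype.card_coe]
  decide

theorem exists_isUnit_mul_eq_mul_diagonal_of_rank (hJ : IsUnit J) (hA : Aᵀ * J * A = J)
    (hab : a * b = 1) (hne : a ≠ b) (hε : ε * ε = 1)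
    (hranka : (A - a • (1 : Matrix (Fin 4) (Fin 4) K)).rank < 4)
    (hrankε : (A - ε • (1 : Matrix (Fin 4) (Fin 4) K)).rank ≤ 2) :
    ∃ P : Matrix (Fin 4) (Fin 4) K, IsUnit P ∧ A * P = P * diagonal ![a, b, ε, ε] := by
  classical
  have haε : a ≠ ε := ne_of_mul_eq_one_of_ne hab hne hε
  have hbε : b ≠ ε := ne_of_mul_eq_one_of_ne (mul_comm a b ▸ hab) hne.symm hε
  have hrankb := rank_sub_smul_one_eq_of_mul_eq_one hJ hA hab
  refine exists_isUnit_mul_eq_mul_diagonal fun μ => ?_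
  have hμ := rank_sub_smul_one_add_finrank_eigenspace A μ
  rw [Fintype.card_fin] at hμ
  rw [Nat.card_eq_fintype_card, Fintype.card_subtype, Finset.card_filter, Fin.sum_univ_four]
  change (if a = μ then 1 else 0) + (if b = μ then 1 else 0) + (if ε = μ then 1 else 0) +
    (if ε = μ then 1 else 0) ≤ _
  grind

theorem sp4_delta_jordan_bra_alpha_plus_ones_general {α : K} (hJ : IsUnit J) (hJskew : Jᵀ = -J)
    (hA : Aᵀ * J * A = J) (hε : ε = 1 ∨ ε = -1) (hα0 : α ≠ 0) (hα1 : α ^ 2 ≠ 1)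
    (hann : (A - (ε * α) • (1 : Matrix (Fin 4) (Fin 4) K)) *
      (A - (ε * α⁻¹) • (1 : Matrix (Fin 4) (Fin 4) K)) *
      (A - ε • (1 : Matrix (Fin 4) (Fin 4) K)) = 0)
    (hrank : (A - ε • (1 : Matrix (Fin 4) (Fin 4) K)).rank = 2) :
    Module.finrank K (skewAdjointCentralizer J A) = 4 := by
  have hεε : ε * ε = 1 := mul_self_eq_one_iff.2 hε
  have hinv : ε * α * (ε * α⁻¹) = 1 := by rw [mul_mul_mul_comm, hεε, mul_inv_cancel₀ hα0, one_mul]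
  have hne : ε * α ≠ ε * α⁻¹ := fun h => hα1 <| by
    rw [sq, mul_eq_one_iff_eq_inv₀ hα0]
    exact mul_left_cancel₀ (left_ne_zero_of_mul_eq_one hεε) h
  have hA_ne : A - ε • (1 : Matrix (Fin 4) (Fin 4) K) ≠ 0 := fun h => by simp [h] at hrank
  have hrankα := rank_sub_smul_one_lt_card hJ hA hinv hA_ne hann
  obtain ⟨P, hP, hAP⟩ :=
    exists_isUnit_mul_eq_mul_diagonal_of_rank hJ hA hinv hne hεε hrankα hrank.le
  rw [finrank_skewAdjointCentralizer hJ hJskew hA hP hAP, card_sym2_mul_eq_one hinv hne hεε]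

end DimensionFour

theorem transpose_Omega : Omegaᵀ = -Omega := by
  ext i j
  fin_cases i <;> fin_cases j <;> simp [Omega]

theorem isUnit_Omega : IsUnit Omega := by
  have h : -Omega * Omega = 1 := by
    ext i j
    fin_cases i <;> fin_cases j <;> simp [Omega, mul_apply, Fin.sum_univ_four]
  exact IsUnit.of_mul_eq_one_right _ h

theorem sp4cent_eq_skewAdjointCentralizer (A : Matrix (Fin 4) (Fin 4) ℂ) :
    sp4cent A = skewAdjointCentralizer Omega A :=
  Submodule.ext fun _ => mem_skewAdjointCentralizer.symm

/-- If `A ∈ Sp₄(ℂ)` is semisimple with eigenvalues `εα, εα⁻¹, ε, ε` where `ε ∈ {1, −1}` and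
`α² ≠ 1`, i.e. has Jordan form `±([α] ⊕ J(1)²)` and satisfies
`(A − εαI)(A − εα⁻¹I)(A − εI) = 0` with `rank (A − εI) = 2`, then its centralizer in
`𝔰𝔭₄(ℂ)` has dimension `4`; equivalently `δ(A) = 10 − dim c(A) = 6`. -/
theorem sp4_delta_jordan_bra_alpha_plus_ones (ε : ℂ) (hε : ε = 1 ∨ ε = -1)
    (α : ℂ) (hα0 : α ≠ 0) (hα1 : α ^ 2 ≠ 1)
    (A : Matrix (Fin 4) (Fin 4) ℂ) (hUnit : IsUnit A)
    (hSp : Aᵀ * Omega * A = Omega)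
    (h1 : (A - (ε * α) • (1 : Matrix (Fin 4) (Fin 4) ℂ)) *
          (A - (ε * α⁻¹) • (1 : Matrix (Fin 4) (Fin 4) ℂ)) *
          (A - ε • (1 : Matrix (Fin 4) (Fin 4) ℂ)) = 0)
    (h2 : (A - ε • (1 : Matrix (Fin 4) (Fin 4) ℂ)).rank = 2) :
    Module.finrank ℂ (sp4cent A) = 4 ∧
      (10 : ℤ) - Module.finrank ℂ (sp4cent A) = 6 := by
  rw [sp4cent_eq_skewAdjointCentralizer, sp4_delta_jordan_bra_alpha_plus_ones_general
    isUnit_Omega transpose_Omega hSp hε hα0 hα1 h1 h2]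
  norm_num

end
end

section
/- Forward direction of the lemma on operators in ℂ[zⁿ,ϑ]: Let m ≥ 0, P_0, …, P_m ∈ ℂ[X], μ ∈ ℂ, n ≥ 1, and let f = ∑_{k≥0} A_k z^k ∈ ℂ⟦z⟧ with A_k = 0 whenever n does not divide k (i.e. f ∈ ℂ⟦zⁿ⟧). If L_μ(f) = 0 for L = ∑_{i=0}^m z^i P_i(ϑ), then also L'_μ(f) = 0, where L' = ∑_{0 ≤ i ≤ m, n | i} z^i P_i(ϑ) is the partial sum of L over the indices i divisible by n. -/
noncomputable section

/-- The action of `P(ϑ + μ)` on `ℂ⟦z⟧`, sending `∑ A_k z^k` to `∑ P(μ + k) A_k z^k`.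
This models the action of `P(ϑ)`, `ϑ = z d/dz`, on `z^μ · ℂ⟦z⟧`. -/
def thetaOp (P : Polynomial ℂ) (μ : ℂ) (f : PowerSeries ℂ) : PowerSeries ℂ :=
  PowerSeries.mk fun k => Polynomial.eval (μ + k) P * PowerSeries.coeff k f

/-- The action `L_μ` of the operator `L = ∑_{i=0}^m z^i P_i(ϑ)` on `z^μ · ℂ⟦z⟧`,
as an operator on `ℂ⟦z⟧`. -/
def Lop (m : ℕ) (P : ℕ → Polynomial ℂ) (μ : ℂ) (f : PowerSeries ℂ) : PowerSeries ℂ :=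
  ∑ i ∈ Finset.range (m + 1), PowerSeries.X ^ i * thetaOp (P i) μ f

/-!
Grade `ℂ⟦z⟧` by the degree modulo `n`. Each `P(ϑ)` acts diagonally on monomials, so it preserves
the grading, while `z ^ i` shifts it by `i`. For homogeneous `f`, the partial sums of `L f` over
the residue classes of `i` are therefore its homogeneous components, and they vanish separately
when `L f = 0`.
-/

section DegreeMod

variable {R : Type*} [Semiring R] {n : ℕ}

/-- The power series `f` is homogeneous of class `r` for the grading of `R⟦X⟧` by the degree
modulo `n`: only monomials `X ^ k` with `k ≡ r` mod `n` occur in it. The zero series has every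
class, and for `n = 0` the class is the degree itself. -/
def HasDegreeMod (n : ℕ) (r : ZMod n) (f : PowerSeries R) : Prop :=
  ∀ k : ℕ, (k : ZMod n) ≠ r → PowerSeries.coeff k f = 0

lemma HasDegreeMod.X_pow_mul {r : ZMod n} {f : PowerSeries R} (hf : HasDegreeMod n r f) (i : ℕ) :
    HasDegreeMod n (i + r) (PowerSeries.X ^ i * f) := by
  intro k hk
  rw [PowerSeries.coeff_X_pow_mul']
  split_ifs with hik
  · obtain ⟨j, rfl⟩ := Nat.exists_eq_add_of_le hik
    rw [Nat.add_sub_cancel_left]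
    exact hf j fun hj => hk (by rw [Nat.cast_add, hj])
  · rfl

lemma sum_filter_eq_zero_of_hasDegreeMod {ι : Type*} {s : Finset ι} {g : ι → PowerSeries R}
    {d : ι → ZMod n} (hg : ∀ i ∈ s, HasDegreeMod n (d i) (g i)) (hsum : ∑ i ∈ s, g i = 0)
    (r : ZMod n) : ∑ i ∈ s with d i = r, g i = 0 := by
  ext k
  rw [map_sum, map_zero]
  by_cases hk : (k : ZMod n) = r
  · calc ∑ i ∈ s with d i = r, PowerSeries.coeff k (g i)
        = ∑ i ∈ s, PowerSeries.coeff k (g i) :=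
          Finset.sum_filter_of_ne fun i hi hne =>
            (not_imp_comm.1 (hg i hi k) hne).symm.trans hk
      _ = 0 := by rw [← map_sum, hsum, map_zero]
  · refine Finset.sum_eq_zero fun i hi => ?_
    obtain ⟨his, rfl⟩ := Finset.mem_filter.1 hi
    exact hg i his k hk

end DegreeMod

lemma coeff_thetaOp (P : Polynomial ℂ) (μ : ℂ) (f : PowerSeries ℂ) (k : ℕ) :
    PowerSeries.coeff k (thetaOp P μ f) = P.eval (μ + k) * PowerSeries.coeff k f :=
  PowerSeries.coeff_mk _ _

lemma HasDegreeMod.thetaOp {n : ℕ} {r : ZMod n} {f : PowerSeries ℂ} (hf : HasDegreeMod n r f)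
    (P : Polynomial ℂ) (μ : ℂ) : HasDegreeMod n r (thetaOp P μ f) := by
  intro k hk
  rw [coeff_thetaOp, hf k hk, mul_zero]

theorem Lop_partial_sum_annihilates_general {m : ℕ} {P : ℕ → Polynomial ℂ} {μ : ℂ} {n : ℕ}
    {s : ZMod n} {f : PowerSeries ℂ} (hf : HasDegreeMod n s f) (hL : Lop m P μ f = 0)
    (r : ZMod n) :
    ∑ i ∈ (Finset.range (m + 1)).filter (fun i : ℕ => (i : ZMod n) = r),
      PowerSeries.X ^ i * thetaOp (P i) μ f = 0 := by
  have hterm (i : ℕ) : HasDegreeMod n (i + s) (PowerSeries.X ^ i * thetaOp (P i) μ f) :=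
    (hf.thetaOp (P i) μ).X_pow_mul i
  simpa only [add_left_inj] using
    sum_filter_eq_zero_of_hasDegreeMod (fun i _ => hterm i) hL (r + s)

/-- **Forward direction of the lemma on operators in `ℂ[zⁿ, ϑ]`.** If `f ∈ ℂ⟦zⁿ⟧`
(all coefficients in degrees not divisible by `n` vanish) is annihilated by `L_μ` for
`L = ∑_{i=0}^m z^i P_i(ϑ)`, then `f` is also annihilated by the partial sum
`L' = ∑_{n ∣ i} z^i P_i(ϑ)` of `L` over the indices divisible by `n`. -/
theorem Lop_partial_sum_annihilates (m : ℕ) (P : ℕ → Polynomial ℂ) (μ : ℂ)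
    (n : ℕ) (hn : 1 ≤ n) (A : ℕ → ℂ)
    (hA : ∀ k : ℕ, ¬ n ∣ k → A k = 0)
    (hL : Lop m P μ (PowerSeries.mk A) = 0) :
    ∑ i ∈ (Finset.range (m + 1)).filter (fun i => n ∣ i),
      PowerSeries.X ^ i * thetaOp (P i) μ (PowerSeries.mk A) = 0 := by
  have hf : HasDegreeMod n 0 (PowerSeries.mk A) := fun k hk => by
    rw [PowerSeries.coeff_mk, hA k (mt (ZMod.natCast_eq_zero_iff k n).2 hk)]
  simpa only [ZMod.natCast_eq_zero_iff] using Lop_partial_sum_annihilates_general hf hL 0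

end
end

section
/- The middle convolution preserves irreducibility: Let n ≥ 1, r ≥ 1 and let A = (A_1, …, A_r) ∈ GL_n(ℂ)^r be an irreducible tuple such that, in case n = 1, at least two of the A_i differ from the identity. Then for every λ ∈ ℂ with λ ∉ {0, 1}, the middle convolution MC_λ(A), i.e. the tuple of automorphisms of V = (ℂⁿ)^r/(K+L) induced by (B_1, …, B_r), is irreducible. -/
open Matrix

noncomputable section

/-- The block matrix `B_k` of the convolution construction: it agrees with the identity
in all block rows except the `k`-th, whose block entries are
`(λ(A_1 − I), …, λ(A_{k−1} − I), λA_k, A_{k+1} − I, …, A_r − I)`. -/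
def Bmat {n r : ℕ} (A : Fin r → Matrix (Fin n) (Fin n) ℂ) (lam : ℂ) (k : Fin r) :
    Matrix (Fin r × Fin n) (Fin r × Fin n) ℂ :=
  Matrix.of fun p q =>
    if p.1 = k then
      (if q.1 < k then lam * (A q.1 - 1) p.2 q.2
       else if q.1 = k then lam * (A k) p.2 q.2
       else (A q.1 - 1) p.2 q.2)
    else (1 : Matrix (Fin r × Fin n) (Fin r × Fin n) ℂ) p q

/-- Projection onto the `k`-th block of `(ℂⁿ)^r`. -/
def blockProj {n r : ℕ} (k : Fin r) : ((Fin r × Fin n) → ℂ) →ₗ[ℂ] (Fin n → ℂ) :=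
  LinearMap.funLeft ℂ ℂ fun b => (k, b)

/-- `K = K_1 ⊕ ⋯ ⊕ K_r`, where `K_k` is the `k`-th block copy of `ker (A_k − I)`. -/
def Ksub {n r : ℕ} (A : Fin r → Matrix (Fin n) (Fin n) ℂ) :
    Submodule ℂ ((Fin r × Fin n) → ℂ) :=
  ⨅ k : Fin r, LinearMap.ker (((A k - 1).mulVecLin).comp (blockProj k))

/-- `L = ∩_k ker (B_k − I)`. -/
def Lsub {n r : ℕ} (A : Fin r → Matrix (Fin n) (Fin n) ℂ) (lam : ℂ) :
    Submodule ℂ ((Fin r × Fin n) → ℂ) :=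
  ⨅ k : Fin r, LinearMap.ker ((Bmat A lam k).mulVecLin - LinearMap.id)

/-- The underlying space `V = (ℂⁿ)^r / (K + L)` of the middle convolution `MC_λ(A)`. -/
abbrev MCspace {n r : ℕ} (A : Fin r → Matrix (Fin n) (Fin n) ℂ) (lam : ℂ) :=
  ((Fin r × Fin n) → ℂ) ⧸ (Ksub A ⊔ Lsub A lam)

/-- A tuple of endomorphisms of `W` is irreducible if the only subspaces of `W` invariant
under every member are `0` and `W`. -/
def IrredEndos {W : Type*} [AddCommGroup W] [Module ℂ W] {r : ℕ}
    (M : Fin r → W →ₗ[ℂ] W) : Prop :=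
  ∀ U : Submodule ℂ W, (∀ k, ∀ v ∈ U, M k v ∈ U) → U = ⊥ ∨ U = ⊤

/-!
For a subspace `U` of `(ℂⁿ)^r` invariant under the `B_k`, the vectors `w` all of whose block copies
lie in `U` form a subspace invariant under the `A_k`, since `B_k` moves the `j`-th block copy of `u`
by a nonzero multiple of the `k`-th block copy of `(A_j − I)u`, up to a multiple of the original.
Irreducibility leaves two cases. If every `w` occurs, then `U` is everything. If only `w = 0` does,
take `v ∈ U` and let `d` be the vector whose `k`-th block is that of `(B_k − I)v`. The `k`-th block
copy of `d_k` lies in `U`, so all block copies of `(A_k − I)d_k` do, whence `d ∈ K`.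
As `B_k − I` multiplies the `k`-th block of a vector of `K` by `λ − 1`, the vector `(λ − 1)v − d`
lies in `L`; since `λ ≠ 1`, this gives `v ∈ K + L`.
-/

section Tuples

variable {ι R W W' : Type*} [CommRing R] [AddCommGroup W] [Module R W]
  [AddCommGroup W'] [Module R W']

/-- Irreducibility of a tuple of endomorphisms, in the sense of `IrredEndos` but over an arbitrary
commutative ring and for an arbitrary index type. As there, the zero module is allowed. -/
def IsIrreducibleTuple (M : ι → Module.End R W) : Prop :=
  ∀ U : Submodule R W, (∀ k, U ∈ (M k).invtSubmodule) → U = ⊥ ∨ U = ⊤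

theorem isIrreducibleTuple_of_surjective {M : ι → Module.End R W} {M' : ι → Module.End R W'}
    (f : W →ₗ[R] W') (hf : Function.Surjective f) (hcomm : ∀ k w, f (M k w) = M' k (f w))
    (h : ∀ U : Submodule R W, (∀ k, U ∈ (M k).invtSubmodule) → U ≤ f.ker ∨ U = ⊤) :
    IsIrreducibleTuple M' := by
  intro U hU
  have hcomap : ∀ k, U.comap f ∈ (M k).invtSubmodule := fun k w hw => by
    simpa only [Submodule.mem_comap, hcomm] using hU k hw
  rcases h (U.comap f) hcomap with hker | htop
  · left
    rw [← Submodule.map_comap_eq_of_surjective hf U]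
    exact (Submodule.map_le_iff_le_comap.2 hker).antisymm bot_le
  · right
    exact Submodule.comap_injective_of_surjective hf (htop.trans (Submodule.comap_top f).symm)

theorem IsIrreducibleTuple.of_surjective {M : ι → Module.End R W} {M' : ι → Module.End R W'}
    (hM : IsIrreducibleTuple M) (f : W →ₗ[R] W') (hf : Function.Surjective f)
    (hcomm : ∀ k w, f (M k w) = M' k (f w)) : IsIrreducibleTuple M' :=
  isIrreducibleTuple_of_surjective f hf hcomm fun U hU =>
    (hM U hU).imp_left fun h => h.le.trans bot_le

end Tuples

section Convolution

variable {ι R V : Type*} [LinearOrder ι] [Fintype ι] [CommRing R] [AddCommGroup V] [Module R V]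

/-- The `k`-th block row of `B_k − I`. Writing its diagonal entry `λA_k − I` as
`λ(A_k − I) + (λ − 1)I` puts all its entries in the common form `c(A_j − I)`, with `c = λ` for
`j ≤ k` and `c = 1` for `j > k`, up to the summand `(λ − 1)I`. -/
def convolutionRow (A : ι → Module.End R V) (lam : R) (k : ι) : (ι → V) →ₗ[R] V :=
  ∑ j, (if j ≤ k then lam else 1) • (A j - 1) ∘ₗ LinearMap.proj j + (lam - 1) • LinearMap.proj k

/-- The endomorphism `B_k` of `V^ι` attached to a tuple `A` of endomorphisms of `V`; the
coordinate-free form of `Bmat`. -/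
def convolutionEnd (A : ι → Module.End R V) (lam : R) (k : ι) : Module.End R (ι → V) :=
  1 + LinearMap.single R (fun _ => V) k ∘ₗ convolutionRow A lam k

/-- The submodule `K = ⨁ ker (A_k − I)` of `V^ι`; the coordinate-free form of `Ksub`. -/
def blockKernel (A : ι → Module.End R V) : Submodule R (ι → V) :=
  Submodule.pi Set.univ fun k => (A k - 1).ker

/-- The submodule `L` of common fixed vectors of the `B_k`; the coordinate-free form of `Lsub`. -/
def commonFixed (A : ι → Module.End R V) (lam : R) : Submodule R (ι → V) :=
  ⨅ k, (convolutionEnd A lam k - 1).ker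

variable {A : ι → Module.End R V} {lam : R}

theorem convolutionRow_apply (k : ι) (v : ι → V) :
    convolutionRow A lam k v =
      ∑ j, (if j ≤ k then lam else 1) • (A j - 1) (v j) + (lam - 1) • v k := by
  simp only [convolutionRow, LinearMap.add_apply, LinearMap.sum_apply, LinearMap.smul_apply,
    LinearMap.comp_apply, LinearMap.proj_apply]

theorem convolutionEnd_apply (k : ι) (v : ι → V) :
    convolutionEnd A lam k v = v + Pi.single k (convolutionRow A lam k v) :=
  rfl

theorem convolutionRow_single (j k : ι) (u : V) :
    convolutionRow A lam k (Pi.single j u) =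
      (if j ≤ k then lam else 1) • (A j - 1) u + (lam - 1) • (Pi.single j u : ι → V) k := by
  rw [convolutionRow_apply, Fintype.sum_eq_single j fun i hi => by simp [hi], Pi.single_eq_same]

omit [LinearOrder ι] [Fintype ι] in
theorem mem_blockKernel {v : ι → V} : v ∈ blockKernel A ↔ ∀ k, (A k - 1) (v k) = 0 := by
  simp [blockKernel]

theorem mem_commonFixed {v : ι → V} :
    v ∈ commonFixed A lam ↔ ∀ k, convolutionRow A lam k v = 0 := by
  simp [commonFixed, convolutionEnd_apply]

theorem convolutionRow_of_mem_blockKernel {v : ι → V} (hv : v ∈ blockKernel A) (k : ι) :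
    convolutionRow A lam k v = (lam - 1) • v k := by
  simp [convolutionRow_apply, mem_blockKernel.1 hv]

theorem blockKernel_mem_invtSubmodule (k : ι) :
    blockKernel A ∈ (convolutionEnd A lam k).invtSubmodule := by
  intro v hv
  rw [Submodule.mem_comap, convolutionEnd_apply, convolutionRow_of_mem_blockKernel hv]
  refine add_mem hv (mem_blockKernel.2 fun j => ?_)
  obtain rfl | hj := eq_or_ne j k
  · rw [Pi.single_eq_same, map_smul, mem_blockKernel.1 hv, smul_zero]
  · rw [Pi.single_eq_of_ne hj, map_zero]

theorem commonFixed_mem_invtSubmodule (k : ι) :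
    commonFixed A lam ∈ (convolutionEnd A lam k).invtSubmodule := by
  intro v hv
  rwa [Submodule.mem_comap, convolutionEnd_apply, mem_commonFixed.1 hv, Pi.single_zero, add_zero]

variable (A lam) in
/-- The middle convolution `MC_λ(A)`: the tuple of endomorphisms of `V^ι / (K + L)` induced by the
`B_k`. -/
def middleConvolution (k : ι) :
    Module.End R ((ι → V) ⧸ (blockKernel A ⊔ commonFixed A lam)) :=
  Submodule.mapQ _ _ (convolutionEnd A lam k) <|
    Sublattice.sup_mem (blockKernel_mem_invtSubmodule k) (commonFixed_mem_invtSubmodule k)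

section Invariant

variable {U : Submodule R (ι → V)} (hU : ∀ k, U ∈ (convolutionEnd A lam k).invtSubmodule)
include hU

theorem single_convolutionRow_mem {v : ι → V} (hv : v ∈ U) (k : ι) :
    Pi.single k (convolutionRow A lam k v) ∈ U :=
  (U.add_mem_iff_right hv).1 (hU k hv)

theorem single_sub_one_mem (hlam : IsUnit lam) {j : ι} {u : V} (hu : Pi.single j u ∈ U) (k : ι) :
    Pi.single k ((A j - 1) u) ∈ U := by
  have hdiag : Pi.single k ((lam - 1) • (Pi.single j u : ι → V) k) ∈ U := by
    obtain rfl | hk := eq_or_ne k j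
    · rw [Pi.single_eq_same, Pi.single_smul]
      exact U.smul_mem _ hu
    · simp [hk]
  have hrow := single_convolutionRow_mem hU hu k
  rw [convolutionRow_single, Pi.single_add, U.add_mem_iff_left hdiag, Pi.single_smul] at hrow
  have hcoeff : IsUnit (if j ≤ k then lam else 1) := by
    split_ifs
    exacts [hlam, isUnit_one]
  exact (U.smul_mem_iff_of_isUnit hcoeff).1 hrow

theorem iInf_comap_single_mem_invtSubmodule (hlam : IsUnit lam) (j : ι) :
    ⨅ k, U.comap (LinearMap.single R (fun _ => V) k) ∈ (A j).invtSubmodule := by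
  intro w hw
  simp only [Submodule.mem_comap, Submodule.mem_iInf, LinearMap.coe_single] at hw ⊢
  intro k
  have hsub := single_sub_one_mem hU hlam (hw j) k
  rw [LinearMap.sub_apply, Module.End.one_apply, Pi.single_sub] at hsub
  exact (U.sub_mem_iff_left (hw k)).1 hsub

end Invariant

theorem mem_sup_of_convolutionRow_mem (hlam : IsUnit (lam - 1)) {v : ι → V}
    (hv : (fun k => convolutionRow A lam k v) ∈ blockKernel A) :
    v ∈ blockKernel A ⊔ commonFixed A lam := by
  set d : ι → V := fun k => convolutionRow A lam k v
  have hL : (lam - 1) • v - d ∈ commonFixed A lam := mem_commonFixed.2 fun k => by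
    rw [map_sub, map_smul, convolutionRow_of_mem_blockKernel hv, sub_self]
  rw [← Submodule.smul_mem_iff_of_isUnit _ hlam, ← add_sub_cancel d ((lam - 1) • v)]
  exact Submodule.add_mem_sup hv hL

theorem IsIrreducibleTuple.le_sup_or_eq_top (hA : IsIrreducibleTuple A) (hlam : IsUnit lam)
    (hlam' : IsUnit (lam - 1)) {U : Submodule R (ι → V)}
    (hU : ∀ k, U ∈ (convolutionEnd A lam k).invtSubmodule) :
    U ≤ blockKernel A ⊔ commonFixed A lam ∨ U = ⊤ := by
  rcases hA _ (iInf_comap_single_mem_invtSubmodule hU hlam) with hbot | htop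
  · refine .inl fun v hv => mem_sup_of_convolutionRow_mem hlam' (mem_blockKernel.2 fun k => ?_)
    rw [← Submodule.mem_bot R, ← hbot, Submodule.mem_iInf]
    exact single_sub_one_mem hU hlam (single_convolutionRow_mem hU hv k)
  · refine .inr (eq_top_iff.2 fun v _ => ?_)
    rw [← Finset.univ_sum_single v]
    exact U.sum_mem fun k _ => Submodule.mem_comap.1 <| iInf_eq_top.1 htop k ▸ Submodule.mem_top

theorem middle_convolution_irreducible_general (hA : IsIrreducibleTuple A) (hlam : IsUnit lam)
    (hlam' : IsUnit (lam - 1)) : IsIrreducibleTuple (middleConvolution A lam) :=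
  isIrreducibleTuple_of_surjective _ (Submodule.mkQ_surjective _) (fun _ _ => rfl) fun _ hU => by
    rw [Submodule.ker_mkQ]
    exact hA.le_sup_or_eq_top hlam hlam' hU

end Convolution

section Matrices

variable {n r : ℕ} (A : Fin r → Matrix (Fin n) (Fin n) ℂ) (lam : ℂ)

theorem Bmat_apply_self (k j : Fin r) (a b : Fin n) :
    Bmat A lam k (k, a) (j, b) = (if j ≤ k then lam else 1) * (A j - 1) a b +
      lam * (1 : Matrix (Fin r × Fin n) (Fin r × Fin n) ℂ) (k, a) (j, b) := by
  rcases lt_trichotomy j k with h | rfl | h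
  · simp [Bmat, Matrix.one_apply, h, h.le, h.ne']
  · simp [Bmat, Matrix.one_apply, mul_sub]
  · simp [Bmat, Matrix.one_apply, h.not_gt, h.not_ge, h.ne, h.ne']

theorem Bmat_mulVec_apply_self (k : Fin r) (a : Fin n) (v : Fin r × Fin n → ℂ) :
    (Bmat A lam k *ᵥ v) (k, a) =
      ∑ j, (if j ≤ k then lam else 1) * ((A j - 1) *ᵥ Function.curry v j) a +
        lam * v (k, a) := by
  calc (Bmat A lam k *ᵥ v) (k, a)
      = ∑ j, (if j ≤ k then lam else 1) * ((A j - 1) *ᵥ Function.curry v j) a +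
          lam * ((1 : Matrix (Fin r × Fin n) (Fin r × Fin n) ℂ) *ᵥ v) (k, a) := by
        simp only [Matrix.mulVec, dotProduct, Fintype.sum_prod_type, Bmat_apply_self, add_mul,
          Finset.sum_add_distrib, Finset.mul_sum, mul_assoc, Function.curry_apply]
    _ = _ := by rw [Matrix.one_mulVec]

theorem Bmat_mulVec_apply_of_ne {i k : Fin r} (h : i ≠ k) (a : Fin n) (v : Fin r × Fin n → ℂ) :
    (Bmat A lam k *ᵥ v) (i, a) = v (i, a) := by
  have hrow : Bmat A lam k (i, a) = (1 : Matrix (Fin r × Fin n) (Fin r × Fin n) ℂ) (i, a) := by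
    ext q
    simp [Bmat, h]
  rw [Matrix.mulVec, hrow]
  exact congrFun (Matrix.one_mulVec v) (i, a)

theorem curry_Bmat_mulVec (k : Fin r) (v : Fin r × Fin n → ℂ) :
    Function.curry (Bmat A lam k *ᵥ v) =
      convolutionEnd (fun j => (A j).mulVecLin) lam k (Function.curry v) := by
  ext i a
  rw [convolutionEnd_apply, Function.curry_apply, Pi.add_apply, Pi.add_apply, Function.curry_apply]
  obtain rfl | hi := eq_or_ne i k
  · have hrow : convolutionRow (fun j => (A j).mulVecLin) lam i (Function.curry v) a =
        ∑ j, (if j ≤ i then lam else 1) * ((A j - 1) *ᵥ Function.curry v j) a +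
          (lam - 1) * v (i, a) := by
      simp only [convolutionRow_apply, LinearMap.sub_apply, Module.End.one_apply,
        Matrix.mulVecLin_apply, Matrix.sub_mulVec, Matrix.one_mulVec, Pi.add_apply,
        Finset.sum_apply, Pi.smul_apply, smul_eq_mul, Function.curry_apply]
    rw [Bmat_mulVec_apply_self, Pi.single_eq_same, hrow]
    ring
  · rw [Bmat_mulVec_apply_of_ne A lam hi, Pi.single_eq_of_ne hi, Pi.zero_apply, add_zero]

theorem map_curry_Ksub :
    (Ksub A).map (LinearEquiv.curry ℂ ℂ (Fin r) (Fin n)).toLinearMap =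
      blockKernel fun j => (A j).mulVecLin := by
  refine (Submodule.map_equiv_eq_comap_symm _ _).trans (Submodule.ext fun v => ?_)
  simp only [Ksub, mem_blockKernel, Submodule.mem_comap, Submodule.mem_iInf, LinearMap.mem_ker,
    LinearMap.comp_apply, Matrix.mulVecLin_apply, Matrix.sub_mulVec, Matrix.one_mulVec]
  rfl

theorem map_curry_Lsub :
    (Lsub A lam).map (LinearEquiv.curry ℂ ℂ (Fin r) (Fin n)).toLinearMap =
      commonFixed (fun j => (A j).mulVecLin) lam := by
  refine (Submodule.map_equiv_eq_comap_symm _ _).trans (Submodule.ext fun v => ?_)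
  simp only [Lsub, commonFixed, Submodule.mem_comap, Submodule.mem_iInf, LinearMap.mem_ker,
    LinearMap.sub_apply, sub_eq_zero, Matrix.mulVecLin_apply, LinearMap.id_apply]
  refine forall_congr' fun k => ?_
  rw [← Function.curry_injective.eq_iff, curry_Bmat_mulVec]
  rfl

/-- Currying identifies the space of the coordinate-free middle convolution with `MCspace`. -/
def mcSpaceEquiv : MCspace A lam ≃ₗ[ℂ] (Fin r → Fin n → ℂ) ⧸
    (blockKernel (fun j => (A j).mulVecLin) ⊔ commonFixed (fun j => (A j).mulVecLin) lam) :=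
  Submodule.Quotient.equiv _ _ (LinearEquiv.curry ℂ ℂ (Fin r) (Fin n)) <| by
    rw [Submodule.map_sup, map_curry_Ksub, map_curry_Lsub]

theorem mcSpaceEquiv_mkQ (v : Fin r × Fin n → ℂ) :
    mcSpaceEquiv A lam (Submodule.mkQ _ v) = Submodule.mkQ _ (Function.curry v) :=
  rfl

theorem mcSpaceEquiv_symm_middleConvolution {k : Fin r} {M : MCspace A lam →ₗ[ℂ] MCspace A lam}
    (hM : M.comp (Ksub A ⊔ Lsub A lam).mkQ =
      (Ksub A ⊔ Lsub A lam).mkQ.comp (Bmat A lam k).mulVecLin) (w) :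
    (mcSpaceEquiv A lam).symm (middleConvolution (fun j => (A j).mulVecLin) lam k w) =
      M ((mcSpaceEquiv A lam).symm w) := by
  obtain ⟨x, rfl⟩ := (mcSpaceEquiv A lam).surjective w
  obtain ⟨v, rfl⟩ := Submodule.mkQ_surjective _ x
  have hv : M (Submodule.mkQ _ v) = Submodule.mkQ _ (Bmat A lam k *ᵥ v) := LinearMap.congr_fun hM v
  rw [LinearEquiv.symm_apply_eq, LinearEquiv.symm_apply_apply, hv, mcSpaceEquiv_mkQ,
    mcSpaceEquiv_mkQ, curry_Bmat_mulVec]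
  rfl

end Matrices

/-- **The middle convolution preserves irreducibility.** Let `A = (A_1, …, A_r)` be an
irreducible tuple in `GL_n(ℂ)` (with at least two members different from the identity if
`n = 1`) and `λ ∉ {0, 1}`. Then the tuple `MC_λ(A)` of automorphisms of
`V = (ℂⁿ)^r/(K + L)` induced by `(B_1, …, B_r)` is irreducible. -/
theorem middle_convolution_irreducible (n r : ℕ) (hn : 1 ≤ n) (hr : 1 ≤ r)
    (A : Fin r → Matrix (Fin n) (Fin n) ℂ)
    (hUnit : ∀ k, IsUnit (A k))
    (hIrr : IrredEndos fun k => (A k).mulVecLin)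
    (hn1 : n = 1 → ∃ i j : Fin r, i ≠ j ∧ A i ≠ 1 ∧ A j ≠ 1)
    (lam : ℂ) (hl0 : lam ≠ 0) (hl1 : lam ≠ 1)
    (M : Fin r → MCspace A lam →ₗ[ℂ] MCspace A lam)
    (hM : ∀ k, (M k).comp (Ksub A ⊔ Lsub A lam).mkQ
        = ((Ksub A ⊔ Lsub A lam).mkQ).comp (Bmat A lam k).mulVecLin) :
    IrredEndos M := by
  have hgen := middle_convolution_irreducible_general hIrr hl0.isUnit (sub_ne_zero.2 hl1).isUnit
  exact hgen.of_surjective (mcSpaceEquiv A lam).symm.toLinearMap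
    (mcSpaceEquiv A lam).symm.surjective fun k => mcSpaceEquiv_symm_middleConvolution A lam (hM k)

end
end

section
/- The middle convolution is inverted by the middle convolution with the inverse parameter: Let n ≥ 1, r ≥ 1 and let A = (A_1, …, A_r) ∈ GL_n(ℂ)^r be an irreducible tuple such that, in case n = 1, at least two of the A_i differ from the identity. Then for every λ ∈ ℂ with λ ∉ {0, 1}, the tuple MC_{λ^{-1}}(MC_λ(A)) is equivalent to A. -/
open Matrix

noncomputable section

/-!
Write `B_k v = v + ι_k (T_k v)` with `ι_k` the inclusion of the `k`-th block, and let
`π : W^r → V` be the quotient map of `MC_λ(A)`. Since `A_k - 1` kills `T_k (K + L)`, it induces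
`Y_k : V → W` with `Y_k (π v) = (A_k - 1) (T_k v)`. With `Ψ m = ∑ k, Y_k m_k` and `T'_k` the
analogue of `T_k` for `MC_{λ⁻¹}(MC_λ(A))`, every `T'_k m` equals `π v` for some `v` with
`T_k v = Ψ m`. It follows that `Ψ : V^r → W` intertwines `B'_k` with `A_k` and has kernel
`K' + L'`, so that it exhibits `A` itself as the middle convolution of `MC_λ(A)` with parameter
`λ⁻¹`.
-/

namespace MiddleConvolution

section Definitions

variable {R W V ι : Type*} [CommRing R] [AddCommGroup W] [Module R W] [AddCommGroup V] [Module R V]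

/-- Condition (*) of Dettweiler and Reiter. Such a vector `w` spans a subsystem that is trivial or a
translated Kummer system: at most one `A_k` acts on it nontrivially. -/
def NoKummerSub (A : ι → Module.End R W) : Prop :=
  ∀ (k : ι) (t : Rˣ) (w : W), (∀ i ≠ k, A i w = w) → A k w = t • w → w = 0

/-- Condition (**) of Dettweiler and Reiter, dual to `NoKummerSub`. That the images of
`A_k - t` and of all `A_i - 1` with `i ≠ k` together span `W` is expressed through the submodules
containing them. -/
def NoKummerQuotient (A : ι → Module.End R W) : Prop :=
  ∀ (k : ι) (t : Rˣ) (U : Submodule R W),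
    (∀ i ≠ k, ∀ w, A i w - w ∈ U) → (∀ w, A k w - t • w ∈ U) → U = ⊤

/-- The sum `K` of the block copies of `ker (A_k - 1)`, the basis-free form of `Ksub`. -/
def blockKer (A : ι → Module.End R W) : Submodule R (ι → W) :=
  Submodule.pi Set.univ fun k => LinearMap.ker (A k - 1)

variable [LinearOrder ι]

/-- The scalar in front of `A_i - 1` in the `k`-th block row of the convolution. -/
def weight (lam : R) (i k : ι) : R := if i ≤ k then lam else 1

variable [Fintype ι]

/-- The `k`-th block row `T_k` of `B_k - 1`. -/
def rowMap (A : ι → Module.End R W) (lam : R) (k : ι) : (ι → W) →ₗ[R] W :=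
  (lam - 1) • LinearMap.proj k + ∑ i, weight lam i k • (A i - 1) ∘ₗ LinearMap.proj i

/-- The endomorphism `B_k` of `W^r`, the basis-free form of `Bmat`. -/
def convolution (A : ι → Module.End R W) (lam : R) (k : ι) : Module.End R (ι → W) :=
  1 + LinearMap.single R (fun _ => W) k ∘ₗ rowMap A lam k

/-- The common fixed space `L` of the `B_k`, the basis-free form of `Lsub`. -/
def fixedSpace (A : ι → Module.End R W) (lam : R) : Submodule R (ι → W) :=
  ⨅ k, LinearMap.ker (convolution A lam k - 1)

/-- The tuple `M` on `V` is a model of the middle convolution `MC_λ(A)` with quotient map `π`.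
Being a predicate on `(V, M, π)`, it applies to every module `V` identified with the quotient
`W^r / (K + L)`. -/
structure IsMiddleConvolution (A : ι → Module.End R W) (lam : R) (M : ι → Module.End R V)
    (π : (ι → W) →ₗ[R] V) : Prop where
  surjective : Function.Surjective π
  ker_eq : LinearMap.ker π = blockKer A ⊔ fixedSpace A lam
  map_convolution : ∀ k v, M k (π v) = π (convolution A lam k v)

end Definitions

section Convolution

variable {R W ι : Type*} [CommRing R] [AddCommGroup W] [Module R W]
  {A : ι → Module.End R W} {lam : R} {k : ι} {v : ι → W}

lemma mem_blockKer : v ∈ blockKer A ↔ ∀ k, A k (v k) = v k := by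
  simp [blockKer, Submodule.mem_pi, sub_eq_zero]

variable [LinearOrder ι]

lemma weight_self (lam : R) (k : ι) : weight lam k k = lam := if_pos le_rfl

lemma weight_mul_weight_inv (lam : Rˣ) (i k : ι) :
    weight (lam : R) i k * weight (↑lam⁻¹ : R) i k = 1 := by
  unfold weight
  split_ifs <;> simp

lemma isUnit_weight (lam : Rˣ) (i k : ι) : IsUnit (weight (lam : R) i k) :=
  .of_mul_eq_one _ (weight_mul_weight_inv lam i k)

variable [Fintype ι]

lemma rowMap_apply (A : ι → Module.End R W) (lam : R) (k : ι) (v : ι → W) :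
    rowMap A lam k v = (lam - 1) • v k + ∑ i, weight lam i k • (A i (v i) - v i) := by
  simp [rowMap, LinearMap.sum_apply]

lemma convolution_apply (A : ι → Module.End R W) (lam : R) (k : ι) (v : ι → W) :
    convolution A lam k v = v + Pi.single k (rowMap A lam k v) := rfl

lemma rowMap_single (A : ι → Module.End R W) (lam : R) (k i : ι) (w : W) :
    rowMap A lam k (Pi.single i w) =
      (lam - 1) • (Pi.single i w : ι → W) k + weight lam i k • (A i w - w) := by
  rw [rowMap_apply, Fintype.sum_eq_single i fun j hj => by simp [hj], Pi.single_eq_same]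

/-- The weights `1` and `λ⁻¹` of the argument cancel those of the row. -/
lemma rowMap_weight_inv_smul (A : ι → Module.End R W) (lam : Rˣ) (k : ι) (u : ι → W) :
    rowMap A (lam : R) k (fun i => weight (↑lam⁻¹ : R) i k • u i) =
      (1 - (↑lam⁻¹ : R)) • u k + ∑ i, (A i (u i) - u i) := by
  simp only [rowMap_apply, map_smul, ← smul_sub, smul_smul, weight_mul_weight_inv, one_smul,
    weight_self, sub_mul, Units.mul_inv, one_mul]

lemma mem_fixedSpace : v ∈ fixedSpace A lam ↔ ∀ k, rowMap A lam k v = 0 := by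
  simp [fixedSpace, Submodule.mem_iInf, convolution_apply]

lemma rowMap_of_mem_blockKer (lam : R) (k : ι) (hv : v ∈ blockKer A) :
    rowMap A lam k v = (lam - 1) • v k := by
  simp [rowMap_apply, mem_blockKer.1 hv]

lemma apply_rowMap_of_mem_sup (k : ι) (hv : v ∈ blockKer A ⊔ fixedSpace A lam) :
    A k (rowMap A lam k v) = rowMap A lam k v := by
  obtain ⟨x, hx, l, hl, rfl⟩ := Submodule.mem_sup.1 hv
  rw [map_add, mem_fixedSpace.1 hl k, add_zero, rowMap_of_mem_blockKer lam k hx, map_smul,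
    mem_blockKer.1 hx k]

lemma rowMap_surjective (hA : NoKummerQuotient A) (lam : Rˣ) (k : ι) :
    Function.Surjective (rowMap A (lam : R) k) := by
  refine LinearMap.range_eq_top.1 (hA k lam⁻¹ _ (fun i hi w => ?_) fun w => ?_)
  · refine ⟨Pi.single i (weight (↑lam⁻¹ : R) i k • w), ?_⟩
    rw [rowMap_single, Pi.single_eq_of_ne hi.symm, smul_zero, zero_add, map_smul, ← smul_sub,
      smul_smul, weight_mul_weight_inv, one_smul]
  · refine ⟨Pi.single k ((↑lam⁻¹ : R) • w), ?_⟩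
    rw [rowMap_single, Pi.single_eq_same, weight_self, map_smul, ← smul_sub, smul_smul, smul_smul,
      sub_mul, Units.mul_inv, one_mul, Units.smul_def]
    module

/-- The vector `w = A_k u - u` is fixed by every `A_i` with `i ≠ k` and satisfies
`A_k w = λ⁻¹ w`. -/
lemma apply_eq_self_of_single_mem_sup (hA : NoKummerSub A) {lam : Rˣ} {u : W}
    (hu : Pi.single k u ∈ blockKer A ⊔ fixedSpace A (lam : R)) : A k u = u := by
  obtain ⟨x, hx, l, hl, hxl⟩ := Submodule.mem_sup.1 hu
  have hx_apply := mem_blockKer.1 hx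
  have hl_eq : l = Pi.single k u - x := eq_sub_of_add_eq' hxl
  have hl_apply (i) (hi : i ≠ k) : A i (l i) = l i := by
    simp [hl_eq, Pi.single_eq_of_ne hi, hx_apply]
  set w := A k (l k) - l k with hw
  have hrow (i) : ((lam : R) - 1) • l i + weight (lam : R) k i • w = 0 := by
    rw [← mem_fixedSpace.1 hl i, rowMap_apply,
      Fintype.sum_eq_single k fun j hj => by rw [hl_apply j hj, sub_self, smul_zero]]
  have hw_zero : w = 0 := by
    refine hA k lam⁻¹ w (fun i hi => ?_) ?_
    · have h := congrArg (⇑(A i - 1)) (hrow i)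
      simpa [hl_apply i hi, sub_eq_zero, (isUnit_weight lam k i).smul_left_cancel] using h
    · have h := congrArg (⇑(A k - 1)) (hrow k)
      rw [map_add, map_smul, map_smul, LinearMap.sub_apply, Module.End.one_apply, ← hw, weight_self,
        map_zero] at h
      rw [eq_inv_smul_iff, Units.smul_def, ← sub_eq_zero, ← h, LinearMap.sub_apply,
        Module.End.one_apply]
      module
  have hlk : A k (l k) - l k = A k u - u := by
    simp [hl_eq, hx_apply]
  exact sub_eq_zero.1 (hlk.symm.trans hw_zero)

end Convolution

namespace IsMiddleConvolution

variable {R W V V' ι : Type*} [CommRing R] [AddCommGroup W] [Module R W] [AddCommGroup V]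
  [Module R V] [AddCommGroup V'] [Module R V'] [LinearOrder ι] [Fintype ι]
  {A : ι → Module.End R W} {M : ι → Module.End R V} {π : (ι → W) →ₗ[R] V}

section Parameter

variable {lam : R}

lemma apply_sub_self (h : IsMiddleConvolution A lam M π) (k : ι) (v : ι → W) :
    M k (π v) - π v = π (Pi.single k (rowMap A lam k v)) := by
  rw [h.map_convolution, convolution_apply, map_add, add_sub_cancel_left]

lemma conj (h : IsMiddleConvolution A lam M π) (e : V ≃ₗ[R] V') :
    IsMiddleConvolution A lam (fun k => e.conj (M k)) (e.toLinearMap ∘ₗ π) where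
  surjective := e.surjective.comp h.surjective
  ker_eq := by rw [LinearEquiv.ker_comp, h.ker_eq]
  map_convolution k v := by simp [LinearEquiv.conj_apply_apply, h.map_convolution]

theorem exists_equiv {M' : ι → Module.End R V'} {π' : (ι → W) →ₗ[R] V'}
    (h : IsMiddleConvolution A lam M π) (h' : IsMiddleConvolution A lam M' π') :
    ∃ φ : V ≃ₗ[R] V', ∀ k v, M' k (φ v) = φ (M k v) := by
  let φ : V ≃ₗ[R] V' := (π.quotKerEquivOfSurjective h.surjective).symm ≪≫ₗ
    Submodule.quotEquivOfEq _ _ (h.ker_eq.trans h'.ker_eq.symm) ≪≫ₗ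
    π'.quotKerEquivOfSurjective h'.surjective
  have hφ (v) : φ (π v) = π' v := by simp [φ]
  refine ⟨φ, fun k => h.surjective.forall.2 fun v => ?_⟩
  rw [hφ, h.map_convolution, h'.map_convolution, hφ]

/-- The map `Y_k : V → W` induced by `(A_k - 1) ∘ T_k`. -/
def inducedRow (h : IsMiddleConvolution A lam M π) (k : ι) : V →ₗ[R] W :=
  (LinearMap.ker π).liftQ ((A k - 1) ∘ₗ rowMap A lam k)
      (fun _ hv => LinearMap.mem_ker.2 <|
        sub_eq_zero.2 <| apply_rowMap_of_mem_sup k (h.ker_eq.le hv)) ∘ₗ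
    (π.quotKerEquivOfSurjective h.surjective).symm

lemma inducedRow_apply (h : IsMiddleConvolution A lam M π) (k : ι) (v : ι → W) :
    h.inducedRow k (π v) = A k (rowMap A lam k v) - rowMap A lam k v := by
  simp [inducedRow]

/-- The map `Ψ : V^r → W` that exhibits `A` as a middle convolution of `M`. -/
def inverseProj (h : IsMiddleConvolution A lam M π) : (ι → V) →ₗ[R] W :=
  ∑ k, h.inducedRow k ∘ₗ LinearMap.proj k

lemma inverseProj_apply (h : IsMiddleConvolution A lam M π) (m : ι → V) :
    h.inverseProj m = ∑ k, h.inducedRow k (m k) := by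
  simp [inverseProj, LinearMap.sum_apply]

lemma inverseProj_single (h : IsMiddleConvolution A lam M π) (k : ι) (x : V) :
    h.inverseProj (Pi.single k x) = h.inducedRow k x := by
  rw [inverseProj_apply, Fintype.sum_eq_single k fun j hj => by simp [hj], Pi.single_eq_same]

end Parameter

section Inverse

variable {lam : Rˣ}

lemma inducedRow_eq_zero (h : IsMiddleConvolution A (lam : R) M π) (hA : NoKummerSub A) {k : ι}
    {x : V} (hx : M k x = x) : h.inducedRow k x = 0 := by
  obtain ⟨v, rfl⟩ := h.surjective x
  rw [inducedRow_apply, sub_eq_zero]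
  refine apply_eq_self_of_single_mem_sup hA (lam := lam) ?_
  rw [← h.ker_eq, LinearMap.mem_ker, ← h.apply_sub_self, hx, sub_self]

lemma exists_lift_rowMap_inv (h : IsMiddleConvolution A (lam : R) M π) (k : ι) (m : ι → V) :
    ∃ v : ι → W, π v = rowMap M (↑lam⁻¹ : R) k m ∧
      rowMap A (lam : R) k v = h.inverseProj m := by
  choose v hv using fun i => h.surjective (m i)
  let u : ι → W := fun i => rowMap A (lam : R) i (v i)
  let s : ι → W := fun i => weight (↑lam⁻¹ : R) i k • u i
  have hπs : π s = ∑ i, weight (↑lam⁻¹ : R) i k • (M i (m i) - m i) := by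
    rw [← Finset.univ_sum_single s, map_sum]
    simp only [s, Pi.single_smul, map_smul, ← hv, h.apply_sub_self, u]
  have hrow : rowMap A (lam : R) k s = (1 - (↑lam⁻¹ : R)) • u k + h.inverseProj m := by
    simp only [s, rowMap_weight_inv_smul, inverseProj_apply, ← hv, inducedRow_apply, u]
  refine ⟨((↑lam⁻¹ : R) - 1) • v k + s, ?_, ?_⟩
  · rw [map_add, map_smul, hv, hπs, rowMap_apply]
  · rw [map_add, map_smul, hrow]
    module

lemma apply_rowMap_inv_sub_self (h : IsMiddleConvolution A (lam : R) M π) (k : ι) (m : ι → V) :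
    M k (rowMap M (↑lam⁻¹ : R) k m) - rowMap M (↑lam⁻¹ : R) k m =
      π (Pi.single k (h.inverseProj m)) := by
  obtain ⟨v, hv, hrow⟩ := h.exists_lift_rowMap_inv k m
  rw [← hv, h.apply_sub_self, hrow]

lemma inducedRow_rowMap_inv (h : IsMiddleConvolution A (lam : R) M π) (k : ι) (m : ι → V) :
    h.inducedRow k (rowMap M (↑lam⁻¹ : R) k m) = A k (h.inverseProj m) - h.inverseProj m := by
  obtain ⟨v, hv, hrow⟩ := h.exists_lift_rowMap_inv k m
  rw [← hv, inducedRow_apply, hrow]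

lemma inverseProj_convolution (h : IsMiddleConvolution A (lam : R) M π) (k : ι) (m : ι → V) :
    h.inverseProj (convolution M (↑lam⁻¹ : R) k m) = A k (h.inverseProj m) := by
  rw [convolution_apply, map_add, inverseProj_single, inducedRow_rowMap_inv, add_sub_cancel]

lemma ker_inverseProj_le (h : IsMiddleConvolution A (lam : R) M π) (hlam : IsUnit ((lam : R) - 1)) :
    LinearMap.ker h.inverseProj ≤ blockKer M ⊔ fixedSpace M (↑lam⁻¹ : R) := by
  intro m hm
  set μ : R := ↑lam⁻¹
  have hunit : IsUnit (1 - μ) := by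
    simpa [μ, mul_sub] using lam⁻¹.isUnit.mul hlam
  let d : ι → V := fun k => rowMap M μ k m
  have hd : d ∈ blockKer M := mem_blockKer.2 fun k => by
    rw [← sub_eq_zero, h.apply_rowMap_inv_sub_self, LinearMap.mem_ker.1 hm, Pi.single_zero,
      map_zero]
  have hfixed : (1 - μ) • m + d ∈ fixedSpace M μ := mem_fixedSpace.2 fun k => by
    rw [map_add, map_smul, rowMap_of_mem_blockKer μ k hd, ← add_smul, sub_add_sub_cancel, sub_self,
      zero_smul]
  rw [← Submodule.smul_mem_iff_of_isUnit _ hunit, ← neg_add_cancel_left d ((1 - μ) • m), add_comm d]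
  exact Submodule.add_mem_sup (neg_mem hd) hfixed

variable [Nonempty ι]

lemma sup_le_ker_inverseProj (h : IsMiddleConvolution A (lam : R) M π) (hA : NoKummerSub A) :
    blockKer M ⊔ fixedSpace M (↑lam⁻¹ : R) ≤ LinearMap.ker h.inverseProj := by
  refine sup_le (fun m hm => ?_) fun m hm => ?_
  · rw [LinearMap.mem_ker, inverseProj_apply]
    exact Finset.sum_eq_zero fun k _ => h.inducedRow_eq_zero hA (mem_blockKer.1 hm k)
  · have hfix (k) : A k (h.inverseProj m) = h.inverseProj m := by
      rw [← sub_eq_zero, ← h.inducedRow_rowMap_inv, mem_fixedSpace.1 hm k, map_zero]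
    obtain ⟨k⟩ := ‹Nonempty ι›
    exact hA k 1 _ (fun i _ => hfix i) (by rw [hfix, one_smul])

lemma inverseProj_surjective (h : IsMiddleConvolution A (lam : R) M π) (hA : NoKummerQuotient A) :
    Function.Surjective h.inverseProj := by
  have hmem (k w) : A k w - w ∈ LinearMap.range h.inverseProj := by
    obtain ⟨v, rfl⟩ := rowMap_surjective hA lam k w
    exact ⟨Pi.single k (π v), by rw [inverseProj_single, inducedRow_apply]⟩
  obtain ⟨k⟩ := ‹Nonempty ι›
  exact LinearMap.range_eq_top.1
    (hA k 1 _ (fun i _ => hmem i) fun w => by simpa only [one_smul] using hmem k w)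

theorem inverse (h : IsMiddleConvolution A (lam : R) M π) (hsub : NoKummerSub A)
    (hquot : NoKummerQuotient A) (hlam : IsUnit ((lam : R) - 1)) :
    IsMiddleConvolution M (↑lam⁻¹ : R) A h.inverseProj where
  surjective := h.inverseProj_surjective hquot
  ker_eq := (h.ker_inverseProj_le hlam).antisymm (h.sup_le_ker_inverseProj hsub)
  map_convolution k m := (h.inverseProj_convolution k m).symm

end Inverse

end IsMiddleConvolution

section Irreducible

variable {W : Type*} [AddCommGroup W] [Module ℂ W] {r : ℕ} {A : Fin r → Module.End ℂ W}

lemma noKummerSub_of_irredEndos (hA : IrredEndos A)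
    (hone : Module.finrank ℂ W = 1 → ∃ i j, i ≠ j ∧ A i ≠ 1 ∧ A j ≠ 1) : NoKummerSub A := by
  intro k t w hfix hk
  by_contra hw
  have heigen (i) : ∃ c : ℂ, A i w = c • w := by
    obtain rfl | hi := eq_or_ne i k
    · exact ⟨t, hk⟩
    · exact ⟨1, by rw [hfix i hi, one_smul]⟩
  have hinv (i) : ∀ v ∈ ℂ ∙ w, A i v ∈ ℂ ∙ w := by
    intro v hv
    obtain ⟨a, rfl⟩ := Submodule.mem_span_singleton.1 hv
    obtain ⟨c, hc⟩ := heigen i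
    rw [map_smul, hc]
    exact Submodule.smul_mem _ _ (Submodule.smul_mem _ _ (Submodule.mem_span_singleton_self w))
  have htop : ℂ ∙ w = ⊤ :=
    (hA _ hinv).resolve_left fun hbot => hw (Submodule.span_singleton_eq_bot.1 hbot)
  have hspan (v) : ∃ a : ℂ, a • w = v :=
    Submodule.mem_span_singleton.1 (htop ▸ Submodule.mem_top)
  have hid (i) (hi : i ≠ k) : A i = 1 := by
    ext v
    obtain ⟨a, rfl⟩ := hspan v
    rw [map_smul, hfix i hi, Module.End.one_apply]
  obtain ⟨i, j, hij, hi, hj⟩ := hone (finrank_eq_one w hw hspan)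
  exact hij ((not_imp_comm.1 (hid i) hi).trans (not_imp_comm.1 (hid j) hj).symm)

lemma noKummerQuotient_of_irredEndos [Nontrivial W] (hA : IrredEndos A) (hsub : NoKummerSub A) :
    NoKummerQuotient A := by
  intro k t U hU hk
  have hinv (i) : ∀ v ∈ U, A i v ∈ U := by
    intro v hv
    obtain rfl | hi := eq_or_ne i k
    · exact (U.sub_mem_iff_left (U.smul_mem (t : ℂ) hv)).1 (hk v)
    · exact (U.sub_mem_iff_left hv).1 (hU i hi v)
  refine (hA U hinv).resolve_left fun hbot => ?_
  subst hbot
  obtain ⟨w, hw⟩ := exists_ne (0 : W)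
  exact hw (hsub k t w (fun i hi => sub_eq_zero.1 (hU i hi w)) (sub_eq_zero.1 (hk w)))

end Irreducible

section Matrix

variable {n r : ℕ} (A : Fin r → Matrix (Fin n) (Fin n) ℂ) (lam : ℂ)

lemma Bmat_apply_self (k i : Fin r) (b c : Fin n) :
    Bmat A lam k (k, b) (i, c) =
      lam * (1 : Matrix (Fin r × Fin n) (Fin r × Fin n) ℂ) (k, b) (i, c) +
        weight lam i k * (A i - 1) b c := by
  rcases lt_trichotomy i k with hik | rfl | hik
  · simp [Bmat, weight, hik, hik.le, Matrix.one_apply, hik.ne']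
  · simp [Bmat, weight, Matrix.one_apply, mul_sub]
  · simp [Bmat, weight, hik.not_gt, hik.not_ge, Matrix.one_apply, hik.ne, hik.ne']

lemma curry_Bmat_mulVec (k : Fin r) (v : Fin r × Fin n → ℂ) :
    LinearEquiv.curry ℂ ℂ _ _ (Bmat A lam k *ᵥ v) =
      convolution (fun i => (A i).mulVecLin) lam k (LinearEquiv.curry ℂ ℂ _ _ v) := by
  ext j b
  obtain rfl | hj := eq_or_ne j k
  · have hone : ∑ q, (1 : Matrix (Fin r × Fin n) (Fin r × Fin n) ℂ) (j, b) q * v q = v (j, b) :=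
      congrFun (Matrix.one_mulVec v) (j, b)
    have hrow : (Bmat A lam j *ᵥ v) (j, b) = lam * v (j, b) +
        ∑ i, weight lam i j * ((A i - 1) *ᵥ Function.curry v i) b := by
      rw [← hone]
      simp only [Matrix.mulVec, dotProduct, Fintype.sum_prod_type, Bmat_apply_self, Function.curry,
        add_mul, Finset.sum_add_distrib, Finset.mul_sum, mul_assoc]
    simp only [LinearEquiv.coe_curry, Function.curry_apply, hrow, Matrix.sub_mulVec,
      Matrix.one_mulVec, Pi.sub_apply, convolution_apply, rowMap_apply, Matrix.mulVecLin_apply,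
      Pi.add_apply, Pi.single_eq_same, Pi.smul_apply, smul_eq_mul, Finset.sum_apply]
    ring
  · simp [convolution_apply, hj, Bmat, Matrix.mulVec, dotProduct, Matrix.one_apply]

lemma map_curry_Ksub :
    (Ksub A).map (LinearEquiv.curry ℂ ℂ (Fin r) (Fin n)).toLinearMap =
      blockKer fun k => (A k).mulVecLin := by
  ext v
  have hblock (k) : blockProj k ((LinearEquiv.curry ℂ ℂ (Fin r) (Fin n)).symm v) = v k := rfl
  simp [Ksub, mem_blockKer, hblock, -LinearEquiv.coe_curry_symm, sub_eq_zero]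

lemma map_curry_Lsub :
    (Lsub A lam).map (LinearEquiv.curry ℂ ℂ (Fin r) (Fin n)).toLinearMap =
      fixedSpace (fun k => (A k).mulVecLin) lam := by
  ext v
  simp only [Submodule.mem_map_equiv, Lsub, fixedSpace, Submodule.mem_iInf, LinearMap.mem_ker,
    LinearMap.sub_apply, sub_eq_zero, Matrix.mulVecLin_apply, LinearMap.id_apply,
    LinearEquiv.eq_symm_apply, curry_Bmat_mulVec, LinearEquiv.apply_symm_apply,
    Module.End.one_apply]

variable {A lam}

lemma isMiddleConvolution_mkQ {M : Fin r → Module.End ℂ (MCspace A lam)}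
    (hM : ∀ k, (M k).comp (Ksub A ⊔ Lsub A lam).mkQ
      = ((Ksub A ⊔ Lsub A lam).mkQ).comp (Bmat A lam k).mulVecLin) :
    IsMiddleConvolution (fun k => (A k).mulVecLin) lam M
      ((Ksub A ⊔ Lsub A lam).mkQ ∘ₗ (LinearEquiv.curry ℂ ℂ (Fin r) (Fin n)).symm.toLinearMap) where
  surjective := (Submodule.mkQ_surjective _).comp (LinearEquiv.surjective _)
  ker_eq := by
    rw [LinearMap.ker_comp, Submodule.ker_mkQ, ← Submodule.map_equiv_eq_comap_symm,
      Submodule.map_sup, map_curry_Ksub, map_curry_Lsub]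
  map_convolution k v := by
    have h := LinearMap.congr_fun (hM k) ((LinearEquiv.curry ℂ ℂ (Fin r) (Fin n)).symm v)
    simp only [LinearMap.comp_apply, LinearEquiv.coe_coe, Matrix.mulVecLin_apply] at h ⊢
    rw [h, ← LinearEquiv.apply_symm_apply (LinearEquiv.curry ℂ ℂ (Fin r) (Fin n)) v,
      ← curry_Bmat_mulVec]
    simp only [LinearEquiv.symm_apply_apply]

end Matrix

end MiddleConvolution

open MiddleConvolution

theorem middle_convolution_inverse_general {R W V V' ι : Type*} [CommRing R]
    [AddCommGroup W] [Module R W] [AddCommGroup V] [Module R V] [AddCommGroup V'] [Module R V']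
    [LinearOrder ι] [Fintype ι] [Nonempty ι] {A : ι → Module.End R W} (hsub : NoKummerSub A)
    (hquot : NoKummerQuotient A) {lam : Rˣ} (hlam : IsUnit ((lam : R) - 1))
    {M : ι → Module.End R V} {π : (ι → W) →ₗ[R] V} (hM : IsMiddleConvolution A (lam : R) M π)
    {M' : ι → Module.End R V'} {π' : (ι → V) →ₗ[R] V'}
    (hM' : IsMiddleConvolution M (↑lam⁻¹ : R) M' π') :
    ∃ φ : W ≃ₗ[R] V', ∀ k w, M' k (φ w) = φ (A k w) :=
  (hM.inverse hsub hquot hlam).exists_equiv hM'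

/-- **The middle convolution is inverted by the middle convolution with inverse
parameter.** Let `A = (A_1, …, A_r)` be an irreducible tuple in `GL_n(ℂ)` (with at least
two members different from the identity if `n = 1`) and `λ ∉ {0, 1}`. Let `M` be the
tuple `MC_λ(A)` on `V = (ℂⁿ)^r/(K + L)`, identify `V` with `ℂ^N` via any linear
isomorphism `e` and let `A'` be the corresponding matrix tuple. Then any tuple `M'`
realizing `MC_{λ⁻¹}(A')` is equivalent to `A`. -/
theorem middle_convolution_inverse (n r : ℕ) (hn : 1 ≤ n) (hr : 1 ≤ r)
    (A : Fin r → Matrix (Fin n) (Fin n) ℂ)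
    (hUnit : ∀ k, IsUnit (A k))
    (hIrr : IrredEndos fun k => (A k).mulVecLin)
    (hn1 : n = 1 → ∃ i j : Fin r, i ≠ j ∧ A i ≠ 1 ∧ A j ≠ 1)
    (lam : ℂ) (hl0 : lam ≠ 0) (hl1 : lam ≠ 1)
    (M : Fin r → MCspace A lam →ₗ[ℂ] MCspace A lam)
    (hM : ∀ k, (M k).comp (Ksub A ⊔ Lsub A lam).mkQ
        = ((Ksub A ⊔ Lsub A lam).mkQ).comp (Bmat A lam k).mulVecLin)
    (N : ℕ) (e : MCspace A lam ≃ₗ[ℂ] (Fin N → ℂ))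
    (A' : Fin r → Matrix (Fin N) (Fin N) ℂ)
    (hA' : ∀ k, A' k = LinearMap.toMatrix' (e.conj (M k)))
    (M' : Fin r → MCspace A' lam⁻¹ →ₗ[ℂ] MCspace A' lam⁻¹)
    (hM' : ∀ k, (M' k).comp (Ksub A' ⊔ Lsub A' lam⁻¹).mkQ
        = ((Ksub A' ⊔ Lsub A' lam⁻¹).mkQ).comp (Bmat A' lam⁻¹ k).mulVecLin) :
    ∃ φ : (Fin n → ℂ) ≃ₗ[ℂ] MCspace A' lam⁻¹,
      ∀ k, ∀ v : Fin n → ℂ, M' k (φ v) = φ ((A k).mulVec v) := by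
  obtain rfl : A' = fun k => LinearMap.toMatrix' (e.conj (M k)) := funext hA'
  have : Nonempty (Fin n) := Fin.pos_iff_nonempty.1 hn
  have : Nonempty (Fin r) := Fin.pos_iff_nonempty.1 hr
  have hsub : NoKummerSub fun k => (A k).mulVecLin :=
    noKummerSub_of_irredEndos hIrr fun hfinrank => by
      obtain ⟨i, j, hij, hi, hj⟩ := hn1 (by rwa [Module.finrank_fin_fun] at hfinrank)
      exact ⟨i, j, hij, (map_ne_one_iff _ Matrix.toLinAlgEquiv'.injective).2 hi,
        (map_ne_one_iff _ Matrix.toLinAlgEquiv'.injective).2 hj⟩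
  have hquot := noKummerQuotient_of_irredEndos hIrr hsub
  have h' := isMiddleConvolution_mkQ hM'
  simp only [← Matrix.toLin'_apply', Matrix.toLin'_toMatrix'] at h'
  exact middle_convolution_inverse_general (lam := Units.mk0 lam hl0) hsub hquot
    (IsUnit.mk0 _ (sub_ne_zero.2 hl1)) ((isMiddleConvolution_mkQ hM).conj e) h'

end
end
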